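/- Let G be a group with a finite inverse-closed generating set A = B ⊔ C, where B and C are disjoint inverse-closed subsets, and let H ≤ G be the subgroup generated by π(B), with π(B) ⊆ H. Suppose N_H ⊆ B* is a regular prefix-closed set of normal forms for H, and N_Tr ⊆ C* is a regular prefix-closed set containing exactly one representative of each right coset Hg of H in G. Then the concatenation N_H · N_Tr is a regular prefix-closed set of normal forms for G over A. -/

import Mathlib

/-!
Each `g : G` lies in exactly one right coset `H t` with `t` the value of a word `v ∈ NTr`, and then
`g * t⁻¹ ∈ H` has exactly one normal form `u ∈ NH`; so `g` is the value of `u ++ v` and of no other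
word of the concatenation. Values of words of `NH` lie in `H` because their letters do.

A prefix of `u ++ v` is either a prefix of `u`, followed by the empty word (which lies in `NTr` since
`NTr` is nonempty and prefix-closed), or `u` followed by a prefix of `v`.

Regularity of a concatenation `L * M` comes from the Myhill-Nerode theorem: the left quotient of
`L * M` by `x` is determined by the left quotient of `L` by `x` together with the set of left
quotients of `M` by those `b` for which `x = a ++ b` with `a ∈ L`. Both range over finite sets.
-/

/-- Evaluation of a word over an alphabet `α` in a monoid `G` via a letter map `π`. -/
def wordVal {G : Type} [Monoid G] {α : Type} (π : α → G) (w : List α) : G :=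
  (w.map π).prod

/-- A language is prefix-closed if it contains every prefix of each of its words. -/
def PrefixClosed {α : Type} (N : Set (List α)) : Prop :=
  ∀ w ∈ N, ∀ p : List α, p <+: w → p ∈ N

/-- `(α, π, inv)` is a finite inverse-closed generating set for the group `G`:
no letter represents the identity, `inv` is an involution with `π (inv a) = (π a)⁻¹`,
and the letters generate `G`. -/
structure IsInvGenSet (G : Type) [Group G] {α : Type} (π : α → G) (inv : α → α) : Prop where
  ne_one : ∀ a, π a ≠ 1
  inv_invol : ∀ a, inv (inv a) = a
  val_inv : ∀ a, π (inv a) = (π a)⁻¹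
  gen : Subgroup.closure (Set.range π) = ⊤

/-- A language over `α` is regular if it is accepted by a finite state automaton. -/
def IsRegularLang {α : Type} (L : Set (List α)) : Prop :=
  ∃ (σ : Type) (_ : Fintype σ) (M : DFA α σ), M.accepts = L

/-- The padded word over `(α ∪ {$})²` corresponding to a pair of words;
`none` plays the role of the padding symbol `$`. -/
def padWord2 {α : Type} (p : List α × List α) : List (Option α × Option α) :=
  (List.range (max p.1.length p.2.length)).map (fun i => (p.1[i]?, p.2[i]?))

/-- Synchronous regularity of a set of pairs of words. -/
def SyncRegular2 {α : Type} (L : Set (List α × List α)) : Prop :=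
  IsRegularLang (padWord2 '' L)

/-- The padded word over `(α ∪ {$})³` corresponding to a triple of words. -/
def padWord3 {α : Type} (p : List α × List α × List α) :
    List (Option α × Option α × Option α) :=
  (List.range (max p.1.length (max p.2.1.length p.2.2.length))).map
    (fun i => (p.1[i]?, p.2.1[i]?, p.2.2[i]?))

/-- Synchronous regularity of a set of triples of words. -/
def SyncRegular3 {α : Type} (L : Set (List α × List α × List α)) : Prop :=
  IsRegularLang (padWord3 '' L)

/-- The left quotients of `M` by the words `b` that remain after cutting from `x` a prefix in `L`. -/
def tailQuotients {α : Type} (L M : Language α) (x : List α) : Set (Language α) :=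
  {Q | ∃ a b, a ∈ L ∧ a ++ b = x ∧ Q = M.leftQuotient b}

/-- A word of `L * M` extending `x` splits into factors either inside `x` or after it. -/
lemma leftQuotient_mul_eq {α : Type} (L M : Language α) (x : List α) :
    (L * M).leftQuotient x = L.leftQuotient x * M + sSup (tailQuotients L M x) := by
  ext y
  rw [Language.mem_add, Language.mem_leftQuotient, Language.mem_mul, Language.mem_mul]
  have h_sup : y ∈ sSup (tailQuotients L M x) ↔ ∃ Q ∈ tailQuotients L M x, y ∈ Q :=
    Set.mem_sUnion
  rw [h_sup]
  constructor
  · rintro ⟨u, hu, v, hv, h⟩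
    rcases List.append_eq_append_iff.1 h with ⟨b, hx, hb⟩ | ⟨c, hc, hy⟩
    · refine Or.inr ⟨_, ⟨u, b, hu, hx.symm, rfl⟩, ?_⟩
      rw [Language.mem_leftQuotient, ← hb]
      exact hv
    · refine Or.inl ⟨c, ?_, v, hv, hy.symm⟩
      rw [Language.mem_leftQuotient, ← hc]
      exact hu
  · rintro (⟨c, hc, v, hv, rfl⟩ | ⟨_, ⟨a, b, ha, rfl, rfl⟩, hy⟩)
    · exact ⟨x ++ c, hc, v, hv, List.append_assoc _ _ _⟩
    · exact ⟨a, ha, b ++ y, hy, (List.append_assoc _ _ _).symm⟩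

/-- Regular languages are closed under concatenation. -/
lemma isRegular_mul {α : Type} {L M : Language α} (hL : L.IsRegular) (hM : M.IsRegular) :
    (L * M).IsRegular := by
  apply Language.IsRegular.of_finite_range_leftQuotient
  refine ((hL.finite_range_leftQuotient.prod hM.finite_range_leftQuotient.finite_subsets).image
    (fun p : Language α × Set (Language α) => p.1 * M + sSup p.2)).subset ?_
  rintro _ ⟨x, rfl⟩
  refine ⟨(L.leftQuotient x, tailQuotients L M x), ⟨⟨x, rfl⟩, ?_⟩, (leftQuotient_mul_eq L M x).symm⟩
  rintro _ ⟨_, b, _, _, rfl⟩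
  exact ⟨b, rfl⟩

lemma wordVal_append {G : Type} [Monoid G] {α : Type} (π : α → G) (u v : List α) :
    wordVal π (u ++ v) = wordVal π u * wordVal π v := by
  simp [wordVal]

/-- **Lemma.** If `N_H ⊆ B*` is a regular prefix-closed set of normal forms for the
subgroup `H` and `N_Tr ⊆ C*` is a regular prefix-closed language containing exactly
one representative of each right coset of `H` in `G`, where `A = B ⊔ C`, then the
concatenation `N_H · N_Tr` is a regular prefix-closed set of normal forms for `G`. -/
theorem concatenated_normal_forms
    {G : Type} [Group G] {α : Type} [Fintype α]
    (π : α → G) (inv : α → α) (hgen : IsInvGenSet G π inv)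
    (B C : Set α) (hdisj : Disjoint B C) (hunion : B ∪ C = Set.univ)
    (hBinv : ∀ b ∈ B, inv b ∈ B) (hCinv : ∀ c ∈ C, inv c ∈ C)
    (H : Subgroup G) (hBH : ∀ b ∈ B, π b ∈ H)
    (hHgen : Subgroup.closure (π '' B) = H)
    (NH NTr : Set (List α))
    (hNHB : ∀ w ∈ NH, ∀ b ∈ w, b ∈ B)
    (hNHreg : IsRegularLang NH) (hNHpc : PrefixClosed NH)
    (hNHnf : ∀ h : G, h ∈ H → ∃! w, w ∈ NH ∧ wordVal π w = h)
    (hNTrC : ∀ w ∈ NTr, ∀ c ∈ w, c ∈ C)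
    (hNTrreg : IsRegularLang NTr) (hNTrpc : PrefixClosed NTr)
    (hNTrtr : ∀ g : G, ∃! w, w ∈ NTr ∧ wordVal π w * g⁻¹ ∈ H) :
    IsRegularLang {w | ∃ u ∈ NH, ∃ v ∈ NTr, w = u ++ v} ∧
    PrefixClosed {w | ∃ u ∈ NH, ∃ v ∈ NTr, w = u ++ v} ∧
    (∀ g : G, ∃! w, w ∈ {w | ∃ u ∈ NH, ∃ v ∈ NTr, w = u ++ v} ∧ wordVal π w = g) := by
  have h_mem : ∀ u ∈ NH, wordVal π u ∈ H := by
    intro u hu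
    refine Subgroup.list_prod_mem _ fun x hx => ?_
    obtain ⟨b, hb, rfl⟩ := List.mem_map.1 hx
    exact hBH b (hNHB u hu b hb)
  refine ⟨?_, ?_, fun g => ?_⟩
  · have h := isRegular_mul (L := NH) (M := NTr) hNHreg hNTrreg
    have h_eq : {w | ∃ u ∈ NH, ∃ v ∈ NTr, w = u ++ v} =
        HMul.hMul (α := Language α) (β := Language α) NH NTr := by
      ext w
      exact ⟨fun ⟨u, hu, v, hv, h⟩ => ⟨u, hu, v, hv, h.symm⟩,
        fun ⟨u, hu, v, hv, h⟩ => ⟨u, hu, v, hv, h.symm⟩⟩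
    rw [h_eq]
    exact h
  · rintro _ ⟨u, hu, v, hv, rfl⟩ p hp
    obtain ⟨r, hr⟩ := hp
    rcases List.append_eq_append_iff.1 hr with ⟨c, rfl, _⟩ | ⟨q, rfl, hq⟩
    · exact ⟨p, hNHpc _ hu p (List.prefix_append p c), [], hNTrpc v hv [] List.nil_prefix, (List.append_nil p).symm⟩
    · exact ⟨u, hu, q, hNTrpc v hv q ⟨r, hq.symm⟩, rfl⟩
  · obtain ⟨v, ⟨hv, hvg⟩, hv_uniq⟩ := hNTrtr g
    have hg : g * (wordVal π v)⁻¹ ∈ H := by simpa using H.inv_mem hvg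
    obtain ⟨u, ⟨hu, hug⟩, hu_uniq⟩ := hNHnf _ hg
    refine ⟨u ++ v, ⟨⟨u, hu, v, hv, rfl⟩, ?_⟩, ?_⟩
    · simp [wordVal_append, hug]
    · rintro _ ⟨⟨u', hu', v', hv', rfl⟩, h⟩
      rw [wordVal_append] at h
      have h_v : v' = v := hv_uniq v' ⟨hv', by
        rw [← h]
        simpa using H.inv_mem (h_mem u' hu')⟩
      subst h_v
      rw [hu_uniq u' ⟨hu', eq_mul_inv_of_mul_eq h⟩]
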